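/- Let k ≥ 2 be an integer. Then for every j with 0 ≤ j ≤ k, B_{2j} B_{2k−2j} (1−2^{1−2j})(1−2^{1−2k+2j}) C(2k,2j) / (−(1−2^{1−2k}) B_{2k}) < 2/(1−2^{1−2k}). (Here the left-hand side is the ratio A_j/A_0 of coefficients of W_k(iz), and in particular the denominator −(1−2^{1−2k})B_{2k} is nonzero.) -/

import Mathlib

/-!
Write `β n = B_{2n}(1/2) = -(1 - 2^{1-2n}) B_{2n}`, so that the ratio in question is
`C(2k, 2j) β j β (k-j) / β k`. The Fourier series of `B_{2n}(x)` at `x = 1/2` expresses `β n`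
through `η(2n) = 1 - 1/2^{2n} + 1/3^{2n} - ⋯`, and the factorials and powers of `π` cancel to leave
`2 η(2j) η(2k-2j) / η(2k)`. The partial sums of the alternating series give `0 < η(2n) < 1` and
`η(2k) ≥ 1 - 2^{-2k} > 1 - 2^{1-2k}`, which is the claim. The value `η(0) = 1/2` lets the extreme
indices `j = 0` and `j = k` be treated like all others.
-/

open Finset Real
open scoped Nat

/-- The value `η(2n)` of the Dirichlet eta function `η(s) = ∑ (-1)^m / (m+1)^s`, encoded through
`B_{2n}(1/2)` rather than the series so that `η(0) = 1/2`, where the series diverges, is covered. -/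
noncomputable def evenEta (n : ℕ) : ℝ :=
  (-1) ^ n * (2 * π) ^ (2 * n) / (2 * (2 * n)!) * bernoulliFun (2 * n) 2⁻¹

lemma bernoulliFun_two_mul_half (n : ℕ) :
    bernoulliFun (2 * n) 2⁻¹ =
      (-((1 - (2 : ℚ) ^ (1 - 2 * (n : ℤ))) * bernoulli (2 * n)) : ℚ) := by
  have hpow : (2 : ℝ) ^ (1 - 2 * (n : ℤ)) = 2 / 2 ^ (2 * n) := by
    rw [zpow_sub₀ two_ne_zero, zpow_one]
    norm_cast
  push_cast
  rw [bernoulliFun_eval_half, hpow]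
  ring

lemma bernoulliFun_two_mul_half_eq_evenEta (n : ℕ) :
    bernoulliFun (2 * n) 2⁻¹ = (-1) ^ n * (2 * (2 * n)!) / (2 * π) ^ (2 * n) * evenEta n := by
  have hsign : (-1 : ℝ) ^ n * (-1) ^ n = 1 := by rw [← mul_pow]; simp
  rw [evenEta]
  generalize bernoulliFun (2 * n) 2⁻¹ = β
  field_simp
  linear_combination -β * hsign

lemma evenEta_zero : evenEta 0 = 1 / 2 := by
  simp [evenEta]

lemma hasSum_evenEta {n : ℕ} (hn : n ≠ 0) :
    HasSum (fun m : ℕ ↦ (-1) ^ m * (1 / ((m : ℝ) + 1) ^ (2 * n))) (evenEta n) := by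
  have hcos (m : ℕ) : cos (2 * π * m * 2⁻¹) = (-1) ^ m := by
    rw [← cos_nat_mul_pi]
    ring_nf
  have hfourier := hasSum_one_div_nat_pow_mul_cos hn (x := 2⁻¹) ⟨by norm_num, by norm_num⟩
  simp only [hcos] at hfourier
  rw [← hasSum_nat_add_iff' 1] at hfourier
  convert! hfourier.neg using 1
  · ext m
    push_cast
    ring
  · have hzero : 1 / ((0 : ℕ) : ℝ) ^ (2 * n) * (-1) ^ 0 = 0 := by simp [hn]
    rw [evenEta, bernoulliFun, sum_range_one, hzero]
    ring

lemma antitone_one_div_nat_add_one_pow (p : ℕ) :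
    Antitone fun m : ℕ ↦ 1 / ((m : ℝ) + 1) ^ p := by
  intro a b hab
  dsimp only
  gcongr

lemma one_sub_one_div_le_evenEta {n : ℕ} (hn : n ≠ 0) : 1 - 1 / 2 ^ (2 * n) ≤ evenEta n :=
  calc 1 - 1 / 2 ^ (2 * n)
      = ∑ i ∈ range (2 * 1), (-1) ^ i * (1 / ((i : ℝ) + 1) ^ (2 * n)) := by
        norm_num [sum_range_succ, sub_eq_add_neg]
    _ ≤ evenEta n := (antitone_one_div_nat_add_one_pow (2 * n)).alternating_series_le_tendsto
        (hasSum_evenEta hn).tendsto_sum_nat 1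

lemma evenEta_pos (n : ℕ) : 0 < evenEta n := by
  rcases eq_or_ne n 0 with rfl | hn
  · norm_num [evenEta_zero]
  · have hpow : 1 / (2 : ℝ) ^ (2 * n) < 1 :=
      (div_lt_one (by positivity)).2 (one_lt_pow₀ one_lt_two (by positivity))
    linarith [one_sub_one_div_le_evenEta hn]

lemma evenEta_lt_one (n : ℕ) : evenEta n < 1 := by
  rcases eq_or_ne n 0 with rfl | hn
  · norm_num [evenEta_zero]
  · have hlt : 1 / (3 : ℝ) ^ (2 * n) < 1 / 2 ^ (2 * n) := by
      gcongr
      norm_num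
    calc evenEta n
        ≤ ∑ i ∈ range (2 * 1 + 1), (-1) ^ i * (1 / ((i : ℝ) + 1) ^ (2 * n)) :=
          (antitone_one_div_nat_add_one_pow (2 * n)).tendsto_le_alternating_series
            (hasSum_evenEta hn).tendsto_sum_nat 1
      _ = 1 - 1 / 2 ^ (2 * n) + 1 / 3 ^ (2 * n) := by
          norm_num [sum_range_succ, sub_eq_add_neg]
      _ < 1 := by linarith

lemma bernoulliFun_two_mul_half_ne_zero (n : ℕ) : bernoulliFun (2 * n) 2⁻¹ ≠ 0 :=
  right_ne_zero_of_mul (evenEta_pos n).ne'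

lemma choose_mul_bernoulliFun_half_div_eq_evenEta (j m : ℕ) :
    (2 * (j + m)).choose (2 * j) * (bernoulliFun (2 * j) 2⁻¹ * bernoulliFun (2 * m) 2⁻¹)
        / bernoulliFun (2 * (j + m)) 2⁻¹
      = 2 * (evenEta j * evenEta m) / evenEta (j + m) := by
  have hη := (evenEta_pos (j + m)).ne'
  rw [bernoulliFun_two_mul_half_eq_evenEta j, bernoulliFun_two_mul_half_eq_evenEta m,
    bernoulliFun_two_mul_half_eq_evenEta (j + m), mul_add 2 j m, Nat.cast_add_choose ℝ]
  field_simp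
  ring

lemma choose_mul_bernoulliFun_half_div_lt {j m : ℕ} (hjm : j + m ≠ 0) :
    (2 * (j + m)).choose (2 * j) * (bernoulliFun (2 * j) 2⁻¹ * bernoulliFun (2 * m) 2⁻¹)
        / bernoulliFun (2 * (j + m)) 2⁻¹
      < 2 / (1 - (2 : ℝ) ^ (1 - 2 * ((j + m : ℕ) : ℤ))) := by
  have hnum : evenEta j * evenEta m < 1 :=
    mul_lt_one_of_nonneg_of_lt_one_left (evenEta_pos j).le (evenEta_lt_one j) (evenEta_lt_one m).le
  have hw : 0 < 1 - (2 : ℝ) ^ (1 - 2 * ((j + m : ℕ) : ℤ)) :=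
    sub_pos.2 (zpow_lt_one_of_neg₀ one_lt_two (by lia))
  have hden : 1 - (2 : ℝ) ^ (1 - 2 * ((j + m : ℕ) : ℤ)) ≤ evenEta (j + m) := by
    have hpow : 1 / (2 : ℝ) ^ (2 * (j + m)) ≤ 2 ^ (1 - 2 * ((j + m : ℕ) : ℤ)) := by
      rw [one_div, ← zpow_natCast, ← zpow_neg]
      exact zpow_le_zpow_right₀ one_le_two (by lia)
    linarith [one_sub_one_div_le_evenEta hjm]
  calc _ = 2 * (evenEta j * evenEta m) / evenEta (j + m) :=
        choose_mul_bernoulliFun_half_div_eq_evenEta j m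
    _ < 2 / evenEta (j + m) := div_lt_div_of_pos_right (by linarith) (evenEta_pos _)
    _ ≤ 2 / (1 - (2 : ℝ) ^ (1 - 2 * ((j + m : ℕ) : ℤ))) := by gcongr

/-- For `k ≥ 2` and `0 ≤ j ≤ k`, the ratio `A_j/A_0` of coefficients of
`W_k(iz)` satisfies
`B_{2j} B_{2k−2j} (1−2^{1−2j})(1−2^{1−2k+2j}) C(2k,2j) / (−(1−2^{1−2k}) B_{2k})
< 2/(1−2^{1−2k})`; in particular the denominator `−(1−2^{1−2k}) B_{2k}` is nonzero. -/
theorem W_coeff_ratio_bound (k : ℕ) (hk : 2 ≤ k) :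
    -((1 - (2 : ℚ) ^ (1 - 2 * (k : ℤ))) * bernoulli (2 * k)) ≠ 0 ∧
    ∀ j ≤ k,
      bernoulli (2 * j) * bernoulli (2 * k - 2 * j)
          * (1 - (2 : ℚ) ^ (1 - 2 * (j : ℤ))) * (1 - (2 : ℚ) ^ (1 - 2 * (k : ℤ) + 2 * j))
          * ((Nat.choose (2 * k) (2 * j)) : ℚ)
          / (-((1 - (2 : ℚ) ^ (1 - 2 * (k : ℤ))) * bernoulli (2 * k)))
        < 2 / (1 - (2 : ℚ) ^ (1 - 2 * (k : ℤ))) := by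
  constructor
  · rw [← Rat.cast_ne_zero (α := ℝ), ← bernoulliFun_two_mul_half]
    exact bernoulliFun_two_mul_half_ne_zero k
  · intro j hj
    obtain ⟨m, rfl⟩ := Nat.exists_eq_add_of_le hj
    have hindex : 2 * (j + m) - 2 * j = 2 * m := by lia
    have hexponent : 1 - 2 * ((j + m : ℕ) : ℤ) + 2 * j = 1 - 2 * (m : ℤ) := by push_cast; ring
    have hlt := choose_mul_bernoulliFun_half_div_lt (j := j) (m := m) (by lia)
    simp only [bernoulliFun_two_mul_half] at hlt
    rw [hindex, hexponent, ← Rat.cast_lt (K := ℝ)]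
    push_cast at hlt ⊢
    convert! hlt using 1
    ring
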